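/- arXiv:2305.17599 — 2 statements merged into one kernel-verified Lean document; each statement's English description precedes it below -/
import Mathlib

section
/- Fix E ∈ ℝ and assume the Lyapunov exponent L(E) exists, i.e. (1/n)∫ ln‖M_n(x,E)‖ dν(x) → L(E) as n → ∞. Then for every κ > 0 there exists N ∈ ℕ such that for all n > N and all x in the circle, |P_n(x,E)| ≤ e^{n(L(E)+κ)}. -/
/-!
The determinant `P_n(x,E)` is, up to sign, the upper left entry of the transfer matrix
`M_n(x,E)` (`transferM_zero_zero`), so it suffices to bound `‖M_n(x,E)‖` uniformly in `x`.
The function `log (2‖M_n‖)` is a subadditive cocycle, hence for a fixed block length `m` it is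
dominated along multiples of `m` by Birkhoff sums of `g + log 2`, where `g = log ‖M_m‖`, over the
map `T ^ m` (`cocycleLog_mul_le`). Choosing `m` large makes the mean of `g` at most
`m (L(E) + κ/8)`, and it remains to bound these Birkhoff sums uniformly in the base point.

The distribution function of `ν` conjugates `T` to the rotation by `α` (`exists_conjugacy`), so it
conjugates `T ^ m` to the irrational rotation by `m α`. For a periodic Lipschitz function `G`, two
Birkhoff sums of length `n` over such a map differ by `o(n)` uniformly in their base points
(`birkhoff_osc`); averaging over one of the base points bounds the other sum by `n (∫ G dν + ε)`.
The function `g` is not continuous, because `f` jumps at the integers, but it is bounded and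
continuous off a countable, hence `ν`-null, set. Its least `K`-Lipschitz majorants (`supConv`)
therefore converge to it almost everywhere as `K → ∞`, and by dominated convergence one of them has
mean at most `∫ g dν + m κ/8`; this majorant is the `G` to which the previous step is applied.
-/

open MeasureTheory Polynomial Filter

noncomputable section

attribute [local instance] Matrix.normedAddCommGroup

/-- Dirichlet restriction `H_n(x)` of the Schrödinger operator with potential
`n ↦ λ f (T^n x)` to `[0, n-1]`: tridiagonal with diagonal `λ f (T^j x)` and `1`
on the two off-diagonals. -/
def HDir (lam : ℝ) (f : ℝ → ℝ) (T : Equiv.Perm ℝ) (x : ℝ) (n : ℕ) :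
    Matrix (Fin n) (Fin n) ℝ :=
  Matrix.of fun i j : Fin n =>
    (if i = j then lam * f ((T ^ (i : ℕ)) x) else 0) +
    (if (i : ℕ) + 1 = (j : ℕ) ∨ (j : ℕ) + 1 = (i : ℕ) then 1 else 0)

/-- Periodic restriction `H̃_n(x)`: the Dirichlet restriction with additional
entries `1` in the corners `(0, n-1)` and `(n-1, 0)`. -/
def HPer (lam : ℝ) (f : ℝ → ℝ) (T : Equiv.Perm ℝ) (x : ℝ) (n : ℕ) :
    Matrix (Fin n) (Fin n) ℝ :=
  HDir lam f T x n +
    Matrix.of (fun i j : Fin n =>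
      if ((i : ℕ) = 0 ∧ (j : ℕ) = n - 1) ∨ ((i : ℕ) = n - 1 ∧ (j : ℕ) = 0) then (1 : ℝ) else 0)

/-- `P_n(x,E) = det (H_n(x) - E)`. -/
def Pdet (lam : ℝ) (f : ℝ → ℝ) (T : Equiv.Perm ℝ) (x E : ℝ) (n : ℕ) : ℝ :=
  (HDir lam f T x n - E • (1 : Matrix (Fin n) (Fin n) ℝ)).det

/-- `P_n(x,E)` with integer index, with the conventions `P_0 = 1` and `P_n = 0` for `n < 0`. -/
def PdetI (lam : ℝ) (f : ℝ → ℝ) (T : Equiv.Perm ℝ) (x E : ℝ) (n : ℤ) : ℝ :=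
  if 0 ≤ n then Pdet lam f T x E n.toNat else 0

/-- `P̃_n(x,E) = det (H̃_n(x) - E)`. -/
def PtildeDet (lam : ℝ) (f : ℝ → ℝ) (T : Equiv.Perm ℝ) (x E : ℝ) (n : ℕ) : ℝ :=
  (HPer lam f T x n - E • (1 : Matrix (Fin n) (Fin n) ℝ)).det

/-- One-step transfer matrix `A_i(x,E)`. -/
def transferA (lam : ℝ) (f : ℝ → ℝ) (T : Equiv.Perm ℝ) (E x : ℝ) (i : ℕ) :
    Matrix (Fin 2) (Fin 2) ℝ :=
  !![E - lam * f ((T ^ i) x), -1; 1, 0]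

/-- `n`-step transfer matrix `M_n(x,E) = A_{n-1} ⋯ A_0`. -/
def transferM (lam : ℝ) (f : ℝ → ℝ) (T : Equiv.Perm ℝ) (E x : ℝ) :
    ℕ → Matrix (Fin 2) (Fin 2) ℝ
  | 0 => 1
  | m + 1 => transferA lam f T E x m * transferM lam f T E x m

/-- Dirichlet restriction `H_{[a, a+m-1]}(x)` of the operator to the integer
interval starting at `a : ℤ` of length `m`. -/
def HBox (lam : ℝ) (f : ℝ → ℝ) (T : Equiv.Perm ℝ) (x : ℝ) (a : ℤ) (m : ℕ) :
    Matrix (Fin m) (Fin m) ℝ :=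
  Matrix.of fun i j : Fin m =>
    (if i = j then lam * f ((T ^ (a + ((i : ℕ) : ℤ))) x) else 0) +
    (if (i : ℕ) + 1 = (j : ℕ) ∨ (j : ℕ) + 1 = (i : ℕ) then 1 else 0)

/-- Green function `G_{x,E,[a,a+m-1]} = (H_{[a,a+m-1]}(x) - E)⁻¹`. -/
def GBox (lam : ℝ) (f : ℝ → ℝ) (T : Equiv.Perm ℝ) (x E : ℝ) (a : ℤ) (m : ℕ) :
    Matrix (Fin m) (Fin m) ℝ :=
  (HBox lam f T x a m - E • (1 : Matrix (Fin m) (Fin m) ℝ))⁻¹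

/-- A point `n : ℤ` is `(x, c, qk)`-regular: there is an interval `[a, b]` of length
`qk` (`b = a + qk - 1`) containing `n` with `|n - a| ≥ qk/5`, `|n - b| ≥ qk/5` and
`|G(a,n)| ≤ e^{-c|n-a|}`, `|G(n,b)| ≤ e^{-c|n-b|}`. -/
def RegularPt (lam : ℝ) (f : ℝ → ℝ) (T : Equiv.Perm ℝ) (x E c : ℝ) (qk : ℕ) (n : ℤ) : Prop :=
  ∃ (a : ℤ) (i0 i j : Fin qk),
    (i0 : ℕ) = 0 ∧ (j : ℕ) = qk - 1 ∧ n = a + ((i : ℕ) : ℤ) ∧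
    (qk : ℝ) / 5 ≤ ((i : ℕ) : ℝ) ∧ (qk : ℝ) / 5 ≤ ((j : ℕ) : ℝ) - ((i : ℕ) : ℝ) ∧
    |GBox lam f T x E a qk i0 i| ≤ Real.exp (-c * ((i : ℕ) : ℝ)) ∧
    |GBox lam f T x E a qk i j| ≤ Real.exp (-c * (((j : ℕ) : ℝ) - ((i : ℕ) : ℝ)))

/-- The `ν`-measure of the positively oriented arc of the circle `ℝ/ℤ` from `u` to `v`
(computed for a `1`-periodic measure `ν` on `ℝ`). -/
def arcMeasure (ν : Measure ℝ) (u v : ℝ) : ℝ :=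
  (ν (Set.Icc u (u + Int.fract (v - u)))).toReal

/-- The `ν`-measure of the smaller of the two complementary arcs between `u` and `v`. -/
def arcDist (ν : Measure ℝ) (u v : ℝ) : ℝ :=
  min (arcMeasure ν u v) (arcMeasure ν v u)

/-- The measure of the gap of the orbit point `T^j x` in the partition of the circle
by `x, Tx, …, T^{qk-1}x`: the measure of the positively oriented arc from `T^j x` to the
closest (in the positive direction) other orbit point. -/
def gapMeas (ν : Measure ℝ) (T : Equiv.Perm ℝ) (x : ℝ) (qk : ℕ) (j : ℕ) : ℝ :=
  sInf ((fun j' : ℕ => arcMeasure ν ((T ^ j) x) ((T ^ j') x)) '' {j' | j' < qk ∧ j' ≠ j})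

/-- `β(α) = limsup_k (ln q_{k+1}) / q_k` computed from the sequence of
continued-fraction denominators. -/
def cfBeta (q : ℕ → ℕ) : ℝ :=
  Filter.limsup (fun k : ℕ => Real.log (q (k + 1) : ℝ) / (q k : ℝ)) Filter.atTop



/-! ### The determinant as an entry of the transfer matrix -/

/-- The `n × n` tridiagonal matrix with diagonal `d 0, …, d (n-1)` and ones on the two
off-diagonals; indexing the diagonal by `ℕ` lets minors be expressed by shifting `d`. -/
def tridiag (d : ℕ → ℝ) (n : ℕ) : Matrix (Fin n) (Fin n) ℝ :=
  Matrix.of fun i j : Fin n =>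
    (if i = j then d i else 0) +
    (if (i : ℕ) + 1 = (j : ℕ) ∨ (j : ℕ) + 1 = (i : ℕ) then 1 else 0)

/-- Three-term recurrence, by expansion along the first row and then the first column. -/
lemma tridiag_det_rec (d : ℕ → ℝ) (n : ℕ) :
    (tridiag d (n + 2)).det
      = d 0 * (tridiag (fun i => d (i + 1)) (n + 1)).det
        - (tridiag (fun i => d (i + 2)) n).det := by
  have hA : (tridiag d (n + 2)).submatrix Fin.succ (Fin.succAbove 0)
      = tridiag (fun i => d (i + 1)) (n + 1) := by
    ext i j
    simp [tridiag, Fin.ext_iff]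
  have hC : ((tridiag d (n + 2)).submatrix Fin.succ (Fin.succAbove 1)).submatrix
      (Fin.succAbove 0) Fin.succ = tridiag (fun i => d (i + 2)) n := by
    ext i j
    have h1 : Fin.succAbove (1 : Fin (n + 2)) j.succ = j.succ.succ := by
      rw [← Fin.succ_zero_eq_one, Fin.succ_succAbove_succ]; simp
    simp [tridiag, Fin.ext_iff, h1]
  have hB : ((tridiag d (n + 2)).submatrix Fin.succ (Fin.succAbove 1)).det
      = (tridiag (fun i => d (i + 2)) n).det := by
    rw [Matrix.det_succ_column_zero, Fin.sum_univ_succ, hC]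
    have h0 : ∀ i : Fin n,
        (tridiag d (n + 2)).submatrix Fin.succ (Fin.succAbove 1) i.succ 0 = 0 := by
      intro i
      simp [tridiag, Fin.ext_iff]
    simp only [h0]
    simp [tridiag]
  rw [Matrix.det_succ_row_zero, Fin.sum_univ_succ, Fin.sum_univ_succ]
  have h0 : ∀ i : Fin n, tridiag d (n + 2) 0 i.succ.succ = 0 := by
    intro i
    simp [tridiag, Fin.ext_iff]
  simp only [h0, hA, Fin.succ_zero_eq_one, hB]
  simp [tridiag]
  ring

lemma Pdet_eq_tridiag (lam : ℝ) (f : ℝ → ℝ) (T : Equiv.Perm ℝ) (x E : ℝ) (n : ℕ) :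
    Pdet lam f T x E n = (tridiag (fun i => lam * f ((T ^ i) x) - E) n).det := by
  unfold Pdet
  congr 1
  ext i j
  by_cases h : i = j
  · subst h; simp [HDir, tridiag]
  · simp [HDir, tridiag, h]

lemma Pdet_rec (lam : ℝ) (f : ℝ → ℝ) (T : Equiv.Perm ℝ) (x E : ℝ) (n : ℕ) :
    Pdet lam f T x E (n + 2)
      = (lam * f x - E) * Pdet lam f T (T x) E (n + 1) - Pdet lam f T (T (T x)) E n := by
  simp only [Pdet_eq_tridiag]
  rw [tridiag_det_rec]
  simp [pow_succ, Equiv.Perm.mul_apply]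

/-- The cocycle identity. -/
lemma transferM_add (lam : ℝ) (f : ℝ → ℝ) (T : Equiv.Perm ℝ) (E x : ℝ) (a b : ℕ) :
    transferM lam f T E x (a + b)
      = transferM lam f T E ((T ^ a) x) b * transferM lam f T E x a := by
  induction b with
  | zero => simp [transferM]
  | succ b ih =>
    rw [← add_assoc, transferM, ih, transferM, Matrix.mul_assoc]
    congr 1
    simp [transferA, add_comm a b, pow_add, Equiv.Perm.mul_apply]

lemma transferM_one (lam : ℝ) (f : ℝ → ℝ) (T : Equiv.Perm ℝ) (E x : ℝ) :
    transferM lam f T E x 1 = !![E - lam * f x, -1; 1, 0] := by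
  simp [transferM, transferA]

lemma transferM_succ_entries (lam : ℝ) (f : ℝ → ℝ) (T : Equiv.Perm ℝ) (E x : ℝ) (n : ℕ) :
    transferM lam f T E x (n + 1) 0 0
      = transferM lam f T E (T x) n 0 0 * (E - lam * f x) + transferM lam f T E (T x) n 0 1
    ∧ transferM lam f T E x (n + 1) 0 1 = - transferM lam f T E (T x) n 0 0 := by
  rw [add_comm n 1, transferM_add, transferM_one, pow_one]
  simp [Matrix.mul_apply, Fin.sum_univ_two]

lemma transferM_zero_zero (lam : ℝ) (f : ℝ → ℝ) (T : Equiv.Perm ℝ) (E : ℝ) (n : ℕ) :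
    ∀ x, transferM lam f T E x n 0 0 = (-1) ^ n * Pdet lam f T x E n := by
  induction n using Nat.twoStepInduction with
  | zero => intro x; simp [transferM, Pdet]
  | one => intro x; simp [transferM_one, Pdet_eq_tridiag, tridiag]
  | more n ih1 ih2 =>
    intro x
    rw [(transferM_succ_entries lam f T E x (n + 1)).1,
      (transferM_succ_entries lam f T E (T x) n).2, Pdet_rec, ih2, ih1]
    ring

lemma abs_Pdet_le (lam : ℝ) (f : ℝ → ℝ) (T : Equiv.Perm ℝ) (x E : ℝ) (n : ℕ) :
    |Pdet lam f T x E n| ≤ ‖transferM lam f T E x n‖ := by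
  have h := Matrix.norm_entry_le_entrywise_sup_norm (transferM lam f T E x n)
    (i := 0) (j := 0)
  rw [transferM_zero_zero] at h
  simpa [abs_mul] using h

/-! ### Norm estimates for the transfer matrices -/

/-- The entrywise sup norm on `2 × 2` matrices is submultiplicative up to a factor `2`. -/
lemma norm_mul_le_two (A B : Matrix (Fin 2) (Fin 2) ℝ) : ‖A * B‖ ≤ 2 * ‖A‖ * ‖B‖ := by
  rw [Matrix.norm_le_iff (by positivity)]
  intro i j
  rw [Matrix.mul_apply, Fin.sum_univ_two]
  have hA := fun k => Matrix.norm_entry_le_entrywise_sup_norm A (i := i) (j := k)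
  have hB := fun k => Matrix.norm_entry_le_entrywise_sup_norm B (i := k) (j := j)
  calc ‖A i 0 * B 0 j + A i 1 * B 1 j‖ ≤ ‖A i 0‖ * ‖B 0 j‖ + ‖A i 1‖ * ‖B 1 j‖ := by
        refine (norm_add_le _ _).trans ?_
        rw [norm_mul, norm_mul]
    _ ≤ ‖A‖ * ‖B‖ + ‖A‖ * ‖B‖ := by
        gcongr
        exacts [hA 0, hB 0, hA 1, hB 1]
    _ = 2 * ‖A‖ * ‖B‖ := by ring

lemma transferM_det (lam : ℝ) (f : ℝ → ℝ) (T : Equiv.Perm ℝ) (E x : ℝ) (n : ℕ) :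
    (transferM lam f T E x n).det = 1 := by
  induction n with
  | zero => simp [transferM]
  | succ n ih => rw [transferM, Matrix.det_mul, ih]; simp [transferA, Matrix.det_fin_two]

/-- A determinant-one matrix cannot have all its entries small. -/
lemma half_le_norm_transferM (lam : ℝ) (f : ℝ → ℝ) (T : Equiv.Perm ℝ) (E x : ℝ) (n : ℕ) :
    1 / 2 ≤ ‖transferM lam f T E x n‖ := by
  have hd := transferM_det lam f T E x n
  set M := transferM lam f T E x n
  rw [Matrix.det_fin_two] at hd
  have hM := fun i j => abs_le.1 (Matrix.norm_entry_le_entrywise_sup_norm M (i := i) (j := j))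
  by_contra hlt
  push Not at hlt
  have hm := fun i j => (abs_le (a := M i j) (b := 1 / 2)).2
    ⟨by linarith [(hM i j).1], by linarith [(hM i j).2]⟩
  have h1 : |M 0 0 * M 1 1| ≤ 1 / 2 * (1 / 2) := by
    rw [abs_mul]; exact mul_le_mul (hm _ _) (hm _ _) (abs_nonneg _) (by norm_num)
  have h2 : |M 0 1 * M 1 0| ≤ 1 / 2 * (1 / 2) := by
    rw [abs_mul]; exact mul_le_mul (hm _ _) (hm _ _) (abs_nonneg _) (by norm_num)
  linarith [(abs_le.1 h1).2, (abs_le.1 h2).1]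

lemma norm_transferM_le (lam : ℝ) (f : ℝ → ℝ) (T : Equiv.Perm ℝ) (E : ℝ) (R : ℝ)
    (hR : 1 ≤ R) (hf : ∀ t, |E - lam * f t| ≤ R) (n : ℕ) (x : ℝ) :
    ‖transferM lam f T E x n‖ ≤ (2 * R) ^ n := by
  induction n with
  | zero =>
    rw [Matrix.norm_le_iff (by simp)]
    intro i j
    fin_cases i <;> fin_cases j <;> simp [transferM]
  | succ n ih =>
    have hA : ‖transferA lam f T E x n‖ ≤ R := by
      rw [Matrix.norm_le_iff (by linarith)]
      intro i j
      fin_cases i <;> fin_cases j <;> simp [transferA, hf, hR]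
      linarith
    rw [transferM, pow_succ]
    refine (norm_mul_le_two _ _).trans ?_
    rw [mul_comm]
    gcongr

/-- `log (2‖M_n(x)‖)` is a genuinely subadditive cocycle. -/
def cocycleLog (lam : ℝ) (f : ℝ → ℝ) (T : Equiv.Perm ℝ) (E x : ℝ) (n : ℕ) : ℝ :=
  Real.log (2 * ‖transferM lam f T E x n‖)

lemma cocycleLog_add_le (lam : ℝ) (f : ℝ → ℝ) (T : Equiv.Perm ℝ) (E x : ℝ) (a b : ℕ) :
    cocycleLog lam f T E x (a + b)
      ≤ cocycleLog lam f T E x a + cocycleLog lam f T E ((T ^ a) x) b := by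
  have h1 := half_le_norm_transferM lam f T E x a
  have h2 := half_le_norm_transferM lam f T E ((T ^ a) x) b
  have h3 := half_le_norm_transferM lam f T E x (a + b)
  unfold cocycleLog
  rw [← Real.log_mul (by linarith) (by linarith)]
  apply Real.log_le_log (by linarith)
  rw [transferM_add]
  linarith [norm_mul_le_two (transferM lam f T E ((T ^ a) x) b) (transferM lam f T E x a)]

lemma cocycleLog_mul_le (lam : ℝ) (f : ℝ → ℝ) (T : Equiv.Perm ℝ) (E x : ℝ) (m k : ℕ) :
    cocycleLog lam f T E x (m * k)
      ≤ Real.log 2 + ∑ i ∈ Finset.range k, cocycleLog lam f T E (((T ^ m) ^ i) x) m := by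
  induction k with
  | zero =>
    have : ‖(1 : Matrix (Fin 2) (Fin 2) ℝ)‖ ≤ 1 := by
      rw [Matrix.norm_le_iff (by simp)]
      intro i j
      fin_cases i <;> fin_cases j <;> simp
    have h0 := half_le_norm_transferM lam f T E x 0
    simp only [mul_zero, cocycleLog, Finset.range_zero, Finset.sum_empty, add_zero]
    apply Real.log_le_log (by linarith)
    simp only [transferM]
    linarith
  | succ k ih =>
    rw [Finset.sum_range_succ, Nat.mul_succ]
    have := cocycleLog_add_le lam f T E x (m * k) m
    rw [pow_mul] at this
    linarith

/-! ### Oscillation of Birkhoff sums over an irrational rotation -/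

/-- Finitely many multiples of an irrational number are `δ`-dense modulo `1`. -/
lemma exists_uniform_dense {c : ℝ} (hc : Irrational c) {δ : ℝ} (hδ : 0 < δ) :
    ∃ J : ℕ, ∀ t : ℝ, ∃ j ≤ J, ∃ k : ℤ, |t + j * c + k| < δ := by
  obtain ⟨N, hN⟩ := exists_nat_gt (1 / δ)
  have hN0 : 0 < N := by
    have : 0 < 1 / δ := by positivity
    exact_mod_cast this.trans hN
  obtain ⟨a, q, hq0, -, hq⟩ := Real.exists_int_int_abs_mul_sub_le c hN0
  lift q to ℕ using hq0.le
  simp only [Int.cast_natCast] at hq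
  have hq0' : q ≠ 0 := by rintro rfl; simp at hq0
  set β := (q : ℝ) * c - a with hβ
  have hβ0 : β ≠ 0 := by
    have h1 : Irrational β := (hc.natCast_mul hq0').sub_intCast a
    exact h1.ne_zero
  have hβδ : |β| < δ := by
    refine hq.trans_lt ?_
    rw [div_lt_iff₀ (by positivity)]
    rw [div_lt_iff₀ hδ] at hN
    nlinarith
  refine ⟨q * ⌊1 / |β|⌋₊, fun t => ?_⟩
  -- a representative `t + l` of `t` modulo `1`, of the sign opposite to `β`
  obtain ⟨l, hl0, hl1⟩ : ∃ l : ℤ, 0 ≤ -(t + l) / β ∧ -(t + l) / β ≤ 1 / |β| := by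
    have f0 := Int.fract_nonneg t
    have f1 := Int.fract_lt_one t
    have fe : Int.fract t = t - ⌊t⌋ := rfl
    rcases lt_or_gt_of_ne hβ0 with h | h
    · refine ⟨-⌊t⌋, ?_, ?_⟩
      · apply div_nonneg_of_nonpos <;> push_cast <;> linarith
      · rw [abs_of_neg h, ← neg_div_neg_eq]
        apply div_le_div_of_nonneg_right _ (by linarith)
        push_cast; linarith
    · refine ⟨-⌊t⌋ - 1, ?_, ?_⟩
      · apply div_nonneg _ h.le
        push_cast; linarith
      · rw [abs_of_pos h]
        apply div_le_div_of_nonneg_right _ h.le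
        push_cast; linarith
  set s := -(t + l) / β with hs
  refine ⟨q * ⌊s⌋₊, Nat.mul_le_mul_left _ (Nat.floor_mono hl1), l - ⌊s⌋₊ * a, ?_⟩
  have e : t + ((q * ⌊s⌋₊ : ℕ) : ℝ) * c + ((l - ⌊s⌋₊ * a : ℤ) : ℝ) = (⌊s⌋₊ - s) * β := by
    have : s * β = -(t + l) := by rw [hs]; field_simp
    push_cast
    rw [sub_mul, this, hβ]
    ring
  rw [e, abs_mul]
  have h1 : |(⌊s⌋₊ : ℝ) - s| ≤ 1 := by
    rw [abs_le]
    constructor <;> linarith [Nat.floor_le hl0, Nat.lt_floor_add_one s]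
  have := mul_le_mul_of_nonneg_right h1 (abs_nonneg β)
  linarith

/-- Birkhoff sums of a periodic Lipschitz function `G` over a map `S` which `h` semiconjugates
to the rotation by an irrational `c`: any two of them differ by `o(n)`, uniformly in the two
base points. Some `S^j x` with `j` bounded is close to `y` modulo `1`, closeness measured by `h`
persists along the orbits, and replacing `x` by `S^j x` costs only a bounded amount. -/
lemma birkhoff_osc (S : Equiv.Perm ℝ) (h G : ℝ → ℝ) {c C B K : ℝ} (hc : Irrational c)
    (hC : 0 < C) (hK : 0 < K)
    (hS1 : ∀ t, S (t + 1) = S t + 1) (hh1 : ∀ t, h (t + 1) = h t + 1)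
    (hhS : ∀ t, h (S t) = h t + c)
    (hhC : ∀ a b, |h a - h b| < 1 → |a - b| ≤ C * |h a - h b|)
    (hG1 : ∀ t, G (t + 1) = G t) (hGB : ∀ t, |G t| ≤ B)
    (hGK : ∀ s t, |G s - G t| ≤ K * |s - t|) {ε : ℝ} (hε : 0 < ε) :
    ∃ N : ℕ, ∀ n ≥ N, ∀ x y, ∑ i ∈ Finset.range n, G ((S ^ i) x)
      ≤ ∑ i ∈ Finset.range n, G ((S ^ i) y) + n * ε := by
  have hSk : ∀ (t : ℝ) (k : ℤ), S (t + k) = S t + k := by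
    intro t k
    induction k using Int.induction_on with
    | zero => simp
    | succ k ih => push_cast at ih ⊢; rw [← add_assoc, hS1, ih]; ring
    | pred k ih =>
      have := hS1 (t + ((-(k : ℤ) - 1 : ℤ) : ℝ))
      push_cast at ih this ⊢
      rw [show t + (-(k : ℝ) - 1) + 1 = t + -k by ring, ih] at this
      linarith
  have hSik : ∀ (i : ℕ) (t : ℝ) (k : ℤ), (S ^ i) (t + k) = (S ^ i) t + k := by
    intro i
    induction i with
    | zero => simp
    | succ i ih => intro t k; rw [pow_succ, Equiv.Perm.mul_apply, hSk, ih]; simp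
  have hhk : ∀ (t : ℝ) (k : ℤ), h (t + k) = h t + k := by
    intro t k
    induction k using Int.induction_on with
    | zero => simp
    | succ k ih => push_cast at ih ⊢; rw [← add_assoc, hh1, ih]; ring
    | pred k ih =>
      have := hh1 (t + ((-(k : ℤ) - 1 : ℤ) : ℝ))
      push_cast at ih this ⊢
      rw [show t + (-(k : ℝ) - 1) + 1 = t + -k by ring, ih] at this
      linarith
  have hGp : Function.Periodic G 1 := hG1
  have hhSi : ∀ (i : ℕ) (t : ℝ), h ((S ^ i) t) = h t + i * c := by
    intro i
    induction i with
    | zero => simp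
    | succ i ih => intro t; rw [pow_succ', Equiv.Perm.mul_apply, hhS, ih]; push_cast; ring
  set δ := min 1 (ε / (2 * (K * C))) with hδ
  have hδ0 : 0 < δ := lt_min one_pos (by positivity)
  obtain ⟨J, hJ⟩ := exists_uniform_dense hc hδ0
  have hB : 0 ≤ B := (abs_nonneg _).trans (hGB 0)
  -- moving the base point along its orbit
  have hshift : ∀ (n j : ℕ) (x : ℝ), ∑ i ∈ Finset.range n, G ((S ^ i) x)
      ≤ ∑ i ∈ Finset.range n, G ((S ^ i) ((S ^ j) x)) + j * (2 * B) := by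
    intro n j x
    induction j with
    | zero => simp
    | succ j ih =>
      have e : ∀ i, G ((S ^ i) ((S ^ (j + 1)) x)) = G ((S ^ (i + 1)) ((S ^ j) x)) := by
        intro i
        rw [← Equiv.Perm.mul_apply, ← Equiv.Perm.mul_apply, ← pow_add, ← pow_add]
        rw [show i + (j + 1) = i + 1 + j by ring]
      simp only [e]
      have h1 := Finset.sum_range_succ (fun i => G ((S ^ i) ((S ^ j) x))) n
      have h2 := Finset.sum_range_succ' (fun i => G ((S ^ i) ((S ^ j) x))) n
      have b1 := abs_le.1 (hGB ((S ^ n) ((S ^ j) x)))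
      have b2 := abs_le.1 (hGB ((S ^ 0) ((S ^ j) x)))
      rw [Nat.cast_succ]
      linarith [b1.1, b1.2, b2.1, b2.2]
  obtain ⟨N, hN⟩ := exists_nat_ge (J * (2 * B) / (ε / 2))
  refine ⟨N, fun n hn x y => ?_⟩
  obtain ⟨j, hjJ, k, hjk⟩ := hJ (h x - h y)
  have hclose : ∀ i, G ((S ^ i) ((S ^ j) x)) ≤ G ((S ^ i) y) + ε / 2 := by
    intro i
    have e1 : G ((S ^ i) ((S ^ j) x)) = G ((S ^ i) ((S ^ j) x + k)) := by
      rw [hSik]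
      have := (hGp.int_mul k) ((S ^ i) ((S ^ j) x))
      rw [mul_one] at this
      exact this.symm
    have e2 : h ((S ^ i) ((S ^ j) x + k)) - h ((S ^ i) y) = h x - h y + j * c + k := by
      rw [hhSi, hhSi, hhk, hhSi]; ring
    have h3 := hhC ((S ^ i) ((S ^ j) x + k)) ((S ^ i) y)
      (by rw [e2]; exact hjk.trans_le (min_le_left _ _))
    rw [e2] at h3
    have h4 := hGK ((S ^ i) ((S ^ j) x + k)) ((S ^ i) y)
    have h5 : K * (C * |h x - h y + j * c + k|) ≤ ε / 2 := by
      have : |h x - h y + j * c + k| ≤ ε / (2 * (K * C)) := hjk.le.trans (min_le_right _ _)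
      calc K * (C * |h x - h y + j * c + k|) ≤ K * (C * (ε / (2 * (K * C)))) := by gcongr
        _ = ε / 2 := by field_simp
    have h6 := mul_le_mul_of_nonneg_left h3 hK.le
    rw [e1]
    linarith [le_abs_self (G ((S ^ i) ((S ^ j) x + k)) - G ((S ^ i) y))]
  have hs := Finset.sum_le_sum (fun i (_ : i ∈ Finset.range n) => hclose i)
  rw [Finset.sum_add_distrib, Finset.sum_const, Finset.card_range, nsmul_eq_mul] at hs
  have hJn : (j : ℝ) * (2 * B) ≤ n * (ε / 2) := by
    rw [div_le_iff₀ (by positivity)] at hN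
    have h1 : (j : ℝ) ≤ J := by exact_mod_cast hjJ
    have h2 : (N : ℝ) ≤ n := by exact_mod_cast hn
    calc (j : ℝ) * (2 * B) ≤ J * (2 * B) := by gcongr
      _ ≤ N * (ε / 2) := hN
      _ ≤ n * (ε / 2) := by gcongr
  linarith [hshift n j x]

/-! ### Lipschitz majorants -/

/-- The sup-convolution `x ↦ sup_y (g y - K |x - y|)`, the least `K`-Lipschitz majorant of `g`. -/
def supConv (g : ℝ → ℝ) (K : ℝ) (x : ℝ) : ℝ := ⨆ y, (g y - K * |x - y|)

section supConv
variable {g : ℝ → ℝ} {B K : ℝ}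

lemma supConv_bdd (hg : ∀ t, |g t| ≤ B) (hK : 0 ≤ K) (x : ℝ) :
    BddAbove (Set.range fun y => g y - K * |x - y|) := by
  refine ⟨B, ?_⟩
  rintro _ ⟨y, rfl⟩
  have := mul_nonneg hK (abs_nonneg (x - y))
  dsimp only
  linarith [(abs_le.1 (hg y)).2]

lemma le_supConv (hg : ∀ t, |g t| ≤ B) (hK : 0 ≤ K) (x : ℝ) : g x ≤ supConv g K x := by
  have := le_ciSup (supConv_bdd hg hK x) x
  simpa [supConv] using this

lemma abs_supConv_le (hg : ∀ t, |g t| ≤ B) (hK : 0 ≤ K) (x : ℝ) : |supConv g K x| ≤ B := by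
  rw [abs_le]
  refine ⟨(abs_le.1 (hg x)).1.trans (le_supConv hg hK x), ciSup_le fun y => ?_⟩
  have := mul_nonneg hK (abs_nonneg (x - y))
  linarith [(abs_le.1 (hg y)).2]

lemma supConv_lip (hg : ∀ t, |g t| ≤ B) (hK : 0 ≤ K) (s t : ℝ) :
    |supConv g K s - supConv g K t| ≤ K * |s - t| := by
  have key : ∀ s t, supConv g K s ≤ supConv g K t + K * |s - t| := by
    intro s t
    refine ciSup_le fun y => ?_
    have h1 := le_ciSup (supConv_bdd hg hK t) y
    have h2 : |t - y| ≤ |s - t| + |s - y| := by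
      rw [abs_sub_comm s t]; exact abs_sub_le t s y
    have h3 := mul_le_mul_of_nonneg_left h2 hK
    change g y - K * |t - y| ≤ supConv g K t at h1
    linarith
  have h1 := key s t
  have h2 := key t s
  rw [abs_sub_comm t s] at h2
  rw [abs_le]
  constructor <;> linarith

lemma supConv_periodic (hg1 : ∀ t, g (t + 1) = g t) (x : ℝ) :
    supConv g K (x + 1) = supConv g K x := by
  unfold supConv
  rw [← (Equiv.addRight (1 : ℝ)).iSup_comp]
  simp [hg1]

lemma supConv_tendsto (hg : ∀ t, |g t| ≤ B) {x : ℝ} (hx : ContinuousAt g x) :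
    Tendsto (fun k : ℕ => supConv g (k : ℝ) x) atTop (nhds (g x)) := by
  rw [Metric.tendsto_atTop]
  intro ε hε
  obtain ⟨δ, hδ, hd⟩ := Metric.continuousAt_iff.1 hx (ε / 2) (by positivity)
  obtain ⟨N, hN⟩ := exists_nat_ge (2 * B / δ)
  refine ⟨N, fun k hk => ?_⟩
  have hkδ : 2 * B ≤ k * δ := by
    rw [div_le_iff₀ hδ] at hN
    have : (N : ℝ) ≤ k := by exact_mod_cast hk
    nlinarith
  have h1 := le_supConv hg (Nat.cast_nonneg (α := ℝ) k) x
  have h2 : supConv g (k : ℝ) x ≤ g x + ε / 2 := by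
    refine ciSup_le fun y => ?_
    have h0 : 0 ≤ (k : ℝ) * |x - y| := by positivity
    by_cases hy : |x - y| < δ
    · have := hd (x := y) (by rw [Real.dist_eq, abs_sub_comm]; exact hy)
      rw [Real.dist_eq, abs_lt] at this
      linarith [this.2]
    · push Not at hy
      have : (k : ℝ) * δ ≤ k * |x - y| := by gcongr
      linarith [(abs_le.1 (hg y)).2, (abs_le.1 (hg x)).1]
  rw [Real.dist_eq, abs_lt]
  constructor <;> linarith

end supConv

/-! ### The invariant measure -/

section measure
variable {ν : Measure ℝ}

lemma measurePreserving_add_int (hνper : Measure.map (fun t : ℝ => t + 1) ν = ν) (k : ℤ) :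
    MeasurePreserving (fun t : ℝ => t + k) ν ν := by
  have h1 : MeasurePreserving (MeasurableEquiv.addRight (1 : ℝ)) ν ν :=
    ⟨(MeasurableEquiv.addRight (1 : ℝ)).measurable, hνper⟩
  have h2 := h1.symm
  induction k using Int.induction_on with
  | zero =>
    convert MeasurePreserving.id ν using 1
    ext t; simp
  | succ k ih =>
    convert h1.comp ih using 1
    ext t; simp [add_assoc]
  | pred k ih =>
    convert h2.comp ih using 1
    ext t; simp [sub_eq_add_neg, add_assoc]

lemma locallyFinite_of_periodic (hνprob : ν (Set.Ico (0 : ℝ) 1) = 1)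
    (hνper : Measure.map (fun t : ℝ => t + 1) ν = ν) : IsLocallyFiniteMeasure ν := by
  have hk : ∀ k : ℤ, ν (Set.Ico (k : ℝ) (k + 1)) = 1 := by
    intro k
    rw [← (measurePreserving_add_int hνper k).measure_preimage measurableSet_Ico.nullMeasurableSet]
    convert hνprob using 2
    ext t; simp [add_comm (k : ℝ)]
  refine ⟨fun x => ⟨Set.Ico ((⌊x⌋ - 1 : ℤ) : ℝ) (((⌊x⌋ - 1 : ℤ) : ℝ) + 1) ∪
    Set.Ico (⌊x⌋ : ℝ) (⌊x⌋ + 1), ?_, ?_⟩⟩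
  · refine Filter.mem_of_superset (Ioo_mem_nhds (a := ((⌊x⌋ - 1 : ℤ) : ℝ)) (b := ⌊x⌋ + 1) ?_ ?_) ?_
    · push_cast; linarith [Int.floor_le x]
    · exact Int.lt_floor_add_one x
    · intro t ht
      rcases lt_or_ge t (⌊x⌋ : ℝ) with h | h
      · left; refine ⟨ht.1.le, ?_⟩; push_cast; linarith
      · right; exact ⟨h, ht.2⟩
  · refine (measure_union_le _ _).trans_lt ?_
    rw [hk, hk]
    simp

/-- Comparability with length excludes atoms. Local finiteness is needed because `toReal`
sends an infinite mass to `0`. -/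
lemma nullSingleton_of_comp [IsLocallyFiniteMeasure ν] {Cm : ℝ} (hCm : 0 < Cm)
    (hcomp : ∀ u v : ℝ, u ≤ v → v ≤ u + 1 → Cm * (ν (Set.Icc u v)).toReal ≤ v - u) :
    NullSingletonClass ν := by
  refine ⟨fun u => ?_⟩
  have h := hcomp u u le_rfl (by linarith)
  rw [Set.Icc_self, sub_self] at h
  have h0 : (ν {u}).toReal = 0 := by
    have : 0 ≤ (ν {u}).toReal := ENNReal.toReal_nonneg
    nlinarith
  rcases (ENNReal.toReal_eq_zero_iff _).1 h0 with h1 | h1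
  · exact h1
  · exact absurd h1 isCompact_singleton.measure_lt_top.ne

/-- The distribution function `h` of `ν` conjugates `T` to the rotation by its rotation
number `α`. -/
lemma exists_conjugacy [IsLocallyFiniteMeasure ν] [NullSingletonClass ν] (T : Equiv.Perm ℝ) {α Cp : ℝ}
    (hTmono : StrictMono ⇑T)
    (hrot : Tendsto (fun m : ℕ => (T ^ m) 0 / (m : ℝ)) atTop (nhds α))
    (hνprob : ν (Set.Ico (0 : ℝ) 1) = 1)
    (hνinv : Measure.map (⇑T) ν = ν)
    (hνper : Measure.map (fun t : ℝ => t + 1) ν = ν)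
    (hcomp : ∀ u v : ℝ, u ≤ v → v ≤ u + 1 → v - u ≤ Cp * (ν (Set.Icc u v)).toReal) :
    ∃ h : ℝ → ℝ, (∀ t, h (t + 1) = h t + 1) ∧ (∀ t, h (T t) = h t + α) ∧
      (∀ a b, |h a - h b| < 1 → |a - b| ≤ Cp * |h a - h b|) := by
  set h : ℝ → ℝ := fun x => ∫ _t in (0 : ℝ)..x, (1 : ℝ) ∂ν with hh
  have hint : ∀ a b, IntervalIntegrable (fun _ => (1 : ℝ)) ν a b := fun a b =>
    intervalIntegrable_const
  have hdiff : ∀ x y, x ≤ y → h y - h x = (ν (Set.Ioc x y)).toReal := by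
    intro x y hxy
    simp only [hh]
    rw [intervalIntegral.integral_interval_sub_left (hint _ _) (hint _ _),
      intervalIntegral.integral_of_le hxy]
    simp [Measure.real]
  have hmono : Monotone h := by
    intro x y hxy
    have := hdiff x y hxy
    have : 0 ≤ (ν (Set.Ioc x y)).toReal := ENNReal.toReal_nonneg
    linarith
  have hinv : ∀ S : ℝ → ℝ, StrictMono S → Measure.map S ν = ν →
      ∀ x, h (S x) = h x + h (S 0) := by
    intro S hS hSν
    have key : ∀ x y, x ≤ y → h (S y) - h (S x) = h y - h x := by
      intro x y hxy
      rw [hdiff _ _ hxy, hdiff _ _ (hS.monotone hxy)]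
      nth_rewrite 1 [← hSν]
      rw [Measure.map_apply hS.monotone.measurable measurableSet_Ioc]
      congr 2
      ext t
      simp [hS.le_iff_le, hS.lt_iff_lt]
    have h00 : h 0 = 0 := by simp [hh]
    intro x
    rcases le_total 0 x with hx | hx
    · linarith [key 0 x hx]
    · linarith [key x 0 hx]
  have h00 : h 0 = 0 := by simp [hh]
  have h01 : h 1 = 1 := by
    have := hdiff 0 1 zero_le_one
    rw [h00, ← measure_congr (Ico_ae_eq_Ioc (μ := ν)), hνprob] at this
    simpa using this
  have hper : ∀ t, h (t + 1) = h t + 1 := by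
    intro t
    have := hinv (fun t => t + 1) (fun a b hab => by simpa using hab) hνper t
    simpa [h01] using this
  have hT := hinv T hTmono hνinv
  have hTm : ∀ m : ℕ, h ((T ^ m) 0) = m * h (T 0) := by
    intro m
    induction m with
    | zero => simp [h00]
    | succ m ih => rw [pow_succ', Equiv.Perm.mul_apply, hT, ih]; push_cast; ring
  -- `h` stays at bounded distance from the identity
  have hbd : ∀ x, |h x - x| ≤ 1 := by
    have hper' : Function.Periodic (fun x => h x - x) 1 := fun x => by
      simp only [hper]; ring
    intro x
    obtain ⟨y, hy, hxy⟩ := hper'.exists_mem_Ico₀ one_pos x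
    change h x - x = h y - y at hxy
    rw [hxy, abs_le]
    have := hmono hy.1
    have := hmono hy.2.le
    constructor <;> linarith [hy.1, hy.2]
  have hα : h (T 0) = α := by
    refine tendsto_nhds_unique ?_ hrot
    have h1 : Tendsto (fun m : ℕ => h (T 0) + ((T ^ m) 0 - h ((T ^ m) 0)) / (m : ℝ)) atTop
        (nhds (h (T 0) + 0)) := by
      refine tendsto_const_nhds.add ?_
      have h2 : Tendsto (fun m : ℕ => 1 / (m : ℝ)) atTop (nhds 0) :=
        tendsto_one_div_atTop_nhds_zero_nat
      refine squeeze_zero_norm (fun m => ?_) h2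
      rw [norm_div, Real.norm_natCast, Real.norm_eq_abs, abs_sub_comm]
      gcongr
      exact hbd _
    rw [add_zero] at h1
    refine h1.congr' ?_
    filter_upwards [eventually_gt_atTop 0] with m hm
    have : (m : ℝ) ≠ 0 := by positivity
    rw [hTm]
    field_simp
    ring
  refine ⟨h, hper, fun t => by rw [hT, hα], ?_⟩
  have key : ∀ a b, a ≤ b → |h a - h b| < 1 → |a - b| ≤ Cp * |h a - h b| := by
    intro a b hab hlt
    rw [abs_sub_comm (h a), abs_of_nonneg (sub_nonneg.2 (hmono hab))] at hlt ⊢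
    have hb : b ≤ a + 1 := by
      by_contra hcon
      push Not at hcon
      have := hmono hcon.le
      rw [hper] at this
      linarith
    have h1 := hcomp a b hab hb
    rw [← measure_congr (Ioc_ae_eq_Icc (μ := ν)), ← hdiff a b hab] at h1
    rw [abs_sub_comm, abs_of_nonneg (sub_nonneg.2 hab)]
    exact h1
  intro a b hlt
  rcases le_total a b with hab | hab
  · exact key a b hab hlt
  · rw [abs_sub_comm (h a)] at hlt ⊢
    rw [abs_sub_comm a]
    exact key b a hab hlt

/-- Integrals of periodic functions over one period are `S`-invariant: `S` carries `(0, 1]` to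
`(S 0, S 0 + 1]`, which is another fundamental domain of `ℝ / ℤ`. -/
lemma setIntegral_comp_eq [NullSingletonClass ν] (S : Equiv.Perm ℝ)
    (hSmono : StrictMono ⇑S) (hS1 : ∀ t, S (t + 1) = S t + 1)
    (hSinv : Measure.map (⇑S) ν = ν)
    (hνper : Measure.map (fun t : ℝ => t + 1) ν = ν)
    (G : ℝ → ℝ) (hG : Continuous G) (hG1 : ∀ t, G (t + 1) = G t) :
    ∫ x in Set.Ico (0 : ℝ) 1, G (S x) ∂ν = ∫ x in Set.Ico (0 : ℝ) 1, G x ∂ν := by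
  have hSm : Measurable S := hSmono.monotone.measurable
  have hinv : VAddInvariantMeasure (AddSubgroup.zmultiples (1 : ℝ)) ℝ ν := by
    refine ⟨fun c s hs => ?_⟩
    obtain ⟨c, hc⟩ := c
    obtain ⟨k, rfl⟩ := AddSubgroup.mem_zmultiples_iff.1 hc
    rw [← (measurePreserving_add_int hνper k).measure_preimage hs.nullMeasurableSet]
    congr 1
    ext t
    simp [AddSubgroup.vadd_def, add_comm]
  have hpre : Set.Ioc (0 : ℝ) 1 = S ⁻¹' Set.Ioc (S 0) (S 0 + 1) := by
    have : S 0 + 1 = S 1 := by rw [← hS1, zero_add]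
    ext t
    rw [this]
    simp [hSmono.le_iff_le, hSmono.lt_iff_lt]
  have hGp : Function.Periodic G 1 := hG1
  rw [setIntegral_congr_set (Ico_ae_eq_Ioc (μ := ν)), setIntegral_congr_set (Ico_ae_eq_Ioc (μ := ν)),
    hpre, ← setIntegral_map measurableSet_Ioc hG.aestronglyMeasurable hSm.aemeasurable, hSinv,
    (isAddFundamentalDomain_Ioc one_pos (S 0) ν).setIntegral_eq
      (isAddFundamentalDomain_Ioc one_pos 0 ν) hGp.map_vadd_zmultiples, zero_add, ← hpre]

end measure

/-! ### Regularity of the potential and of the transfer matrices -/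

section regularity
variable {f : ℝ → ℝ} {γm γp : ℝ}

lemma f_sub_int (hfper : ∀ t : ℝ, f (t + 1) = f t) (t : ℝ) (k : ℤ) : f (t - k) = f t := by
  have := (show Function.Periodic f 1 from hfper).sub_int_mul_eq k (x := t)
  simpa using this

lemma abs_f_le (hγm : 0 < γm) (hfper : ∀ t : ℝ, f (t + 1) = f t) (hf0 : f 0 = 0)
    (hfLip : ∀ u v : ℝ, 0 ≤ u → u < v → v < 1 →
      γm * (v - u) ≤ f v - f u ∧ f v - f u ≤ γp * (v - u)) (hγp : 0 < γp) (t : ℝ) :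
    |f t| ≤ γp := by
  rw [← f_sub_int hfper t ⌊t⌋]
  change |f (Int.fract t)| ≤ γp
  have f0 := Int.fract_nonneg t
  have f1 := Int.fract_lt_one t
  rcases f0.eq_or_lt with h | h
  · rw [← h, hf0, abs_zero]; exact hγp.le
  · have := hfLip 0 _ le_rfl h f1
    rw [hf0] at this
    have h1 : 0 ≤ γm * (Int.fract t - 0) := by nlinarith
    rw [abs_le]
    constructor <;> nlinarith [this.1, this.2]

lemma f_continuousAt (hγm : 0 < γm) (hfper : ∀ t : ℝ, f (t + 1) = f t)
    (hfLip : ∀ u v : ℝ, 0 ≤ u → u < v → v < 1 →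
      γm * (v - u) ≤ f v - f u ∧ f v - f u ≤ γp * (v - u)) (t : ℝ) (ht : ∀ k : ℤ, t ≠ k) :
    ContinuousAt f t := by
  have hlip : ∀ u v : ℝ, u ∈ Set.Ico (⌊t⌋ : ℝ) (⌊t⌋ + 1) → v ∈ Set.Ico (⌊t⌋ : ℝ) (⌊t⌋ + 1) →
      u < v → |f v - f u| ≤ γp * |v - u| := by
    intro u v hu hv huv
    have := hfLip (u - ⌊t⌋) (v - ⌊t⌋) (by linarith [hu.1]) (by linarith) (by linarith [hv.2])
    rw [f_sub_int hfper, f_sub_int hfper] at this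
    have h0 : 0 ≤ γm * (v - ⌊t⌋ - (u - ⌊t⌋)) := mul_nonneg hγm.le (by linarith)
    rw [abs_of_nonneg (by linarith [this.1]), abs_of_pos (by linarith)]
    linarith [this.2]
  have htm : t ∈ Set.Ico (⌊t⌋ : ℝ) (⌊t⌋ + 1) := ⟨Int.floor_le t, Int.lt_floor_add_one t⟩
  refine continuousAt_of_locally_lipschitz (r := min (t - ⌊t⌋) (⌊t⌋ + 1 - t)) (K := γp) ?_ ?_
  · exact lt_min (sub_pos.2 (lt_of_le_of_ne htm.1 (ht _).symm)) (sub_pos.2 htm.2)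
  · intro s hs
    rw [Real.dist_eq, lt_min_iff, abs_lt, abs_lt] at hs
    have hsm : s ∈ Set.Ico (⌊t⌋ : ℝ) (⌊t⌋ + 1) := ⟨by linarith [hs.1.1], by linarith [hs.2.2]⟩
    rw [Real.dist_eq, Real.dist_eq]
    rcases lt_trichotomy s t with h | h | h
    · rw [abs_sub_comm, abs_sub_comm s]; exact hlip s t hsm htm h
    · simp [h]
    · exact hlip t s htm hsm h

end regularity

lemma perm_pow_strictMono {T : Equiv.Perm ℝ} (hT : StrictMono ⇑T) (n : ℕ) :
    StrictMono ⇑(T ^ n) := by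
  induction n with
  | zero => exact strictMono_id
  | succ n ih => rw [pow_succ']; exact hT.comp ih

lemma perm_pow_add_one {T : Equiv.Perm ℝ} (hT : ∀ t : ℝ, T (t + 1) = T t + 1) (n : ℕ) (t : ℝ) :
    (T ^ n) (t + 1) = (T ^ n) t + 1 := by
  induction n with
  | zero => rfl
  | succ n ih => rw [pow_succ', Equiv.Perm.mul_apply, ih, hT, Equiv.Perm.mul_apply]

lemma perm_pow_map {T : Equiv.Perm ℝ} (hT : StrictMono ⇑T) {ν : Measure ℝ}
    (hν : Measure.map (⇑T) ν = ν) (n : ℕ) : Measure.map (⇑(T ^ n)) ν = ν := by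
  have h : MeasurePreserving (⇑T) ν ν := ⟨hT.monotone.measurable, hν⟩
  rw [Equiv.Perm.coe_pow]
  exact (h.iterate n).map_eq

lemma transferM_continuousAt (lam : ℝ) {f : ℝ → ℝ} {T : Equiv.Perm ℝ} (E : ℝ)
    (hT : StrictMono ⇑T) (hf : ∀ t : ℝ, (∀ k : ℤ, t ≠ k) → ContinuousAt f t) (x : ℝ)
    (hx : ∀ (i : ℕ) (k : ℤ), (T ^ i) x ≠ k) (n : ℕ) :
    ContinuousAt (fun y => transferM lam f T E y n) x := by
  induction n with
  | zero => exact continuousAt_const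
  | succ n ih =>
    have hTn : ContinuousAt (⇑(T ^ n)) x :=
      ((perm_pow_strictMono hT n).monotone.continuous_of_surjective (T ^ n).surjective).continuousAt
    have hfn : ContinuousAt (fun y => f ((T ^ n) y)) x :=
      ContinuousAt.comp (g := f) (hf _ (hx n)) hTn
    have hA : ContinuousAt (fun y => transferA lam f T E y n) x := by
      refine continuousAt_pi.2 fun i => continuousAt_pi.2 fun j => ?_
      fin_cases i <;> fin_cases j <;> simp only [transferA]
      exacts [continuousAt_const.sub (continuousAt_const.mul hfn), continuousAt_const,
        continuousAt_const, continuousAt_const]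
    exact ContinuousAt.mul hA ih

lemma transferM_periodic (lam : ℝ) {f : ℝ → ℝ} {T : Equiv.Perm ℝ} (E : ℝ)
    (hfper : ∀ t : ℝ, f (t + 1) = f t) (hT : ∀ t : ℝ, T (t + 1) = T t + 1) (x : ℝ) (n : ℕ) :
    transferM lam f T E (x + 1) n = transferM lam f T E x n := by
  induction n with
  | zero => rfl
  | succ n ih => rw [transferM, transferM, ih]; simp [transferA, perm_pow_add_one hT, hfper]

/-! ### The upper bound -/

/-- Uniform upper bound on `|P_n(x,E)|`: for every `κ > 0` there is `N`
such that `|P_n(x,E)| ≤ e^{n(L(E)+κ)}` for all `n > N` and all `x`. -/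
theorem Pdet_upper_bound
    (f : ℝ → ℝ) (T : Equiv.Perm ℝ) (ν : Measure ℝ)
    (γm γp Cm Cp lam α : ℝ) (E LE : ℝ)
    (hγm : 0 < γm) (hγp : 0 < γp) (hlam : 0 < lam)
    (hfper : ∀ t : ℝ, f (t + 1) = f t) (hf0 : f 0 = 0)
    (hf1 : Filter.Tendsto f (nhdsWithin 1 (Set.Iio 1)) (nhds 1))
    (hfLip : ∀ u v : ℝ, 0 ≤ u → u < v → v < 1 →
      γm * (v - u) ≤ f v - f u ∧ f v - f u ≤ γp * (v - u))
    (hTmono : StrictMono ⇑T) (hTper : ∀ t : ℝ, T (t + 1) = T t + 1)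
    (hαirr : Irrational α)
    (hrot : Filter.Tendsto (fun m : ℕ => (T ^ m) 0 / (m : ℝ)) Filter.atTop (nhds α))
    (hCm : 0 < Cm) (hCp : 0 < Cp)
    (hνprob : ν (Set.Ico (0 : ℝ) 1) = 1)
    (hνinv : MeasureTheory.Measure.map (⇑T) ν = ν)
    (hνper : MeasureTheory.Measure.map (fun t : ℝ => t + 1) ν = ν)
    (hcomp : ∀ u v : ℝ, u ≤ v → v ≤ u + 1 →
      Cm * (ν (Set.Icc u v)).toReal ≤ v - u ∧ v - u ≤ Cp * (ν (Set.Icc u v)).toReal)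
    (hLya : Filter.Tendsto (fun m : ℕ =>
      (1 / (m : ℝ)) * ∫ x in Set.Ico (0 : ℝ) 1, Real.log ‖transferM lam f T E x m‖ ∂ν)
      Filter.atTop (nhds LE))
 :
    ∀ κ : ℝ, 0 < κ → ∃ N : ℕ, ∀ n : ℕ, N < n → ∀ x : ℝ,
      |Pdet lam f T x E n| ≤ Real.exp ((n : ℝ) * (LE + κ)) := by
  intro κ hκ
  have hlf := locallyFinite_of_periodic hνprob hνper
  have hna := nullSingleton_of_comp hCm (fun u v h1 h2 => (hcomp u v h1 h2).1)
  obtain ⟨h, hh1, hhT, hhC⟩ := exists_conjugacy T hTmono hrot hνprob hνinv hνper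
    (fun u v h1 h2 => (hcomp u v h1 h2).2)
  -- a uniform bound for the one-step matrices
  obtain ⟨R, hR1, hR⟩ : ∃ R : ℝ, 1 ≤ R ∧ ∀ t, |E - lam * f t| ≤ R := by
    refine ⟨1 + |E| + lam * γp, ?_, fun t => ?_⟩
    · have := abs_nonneg E
      have := mul_pos hlam hγp
      linarith
    · have h1 := abs_f_le hγm hfper hf0 hfLip hγp t
      have h2 := abs_sub E (lam * f t)
      rw [abs_mul, abs_of_pos hlam] at h2
      have := mul_le_mul_of_nonneg_left h1 hlam.le
      linarith
  have hR0 : 0 ≤ Real.log (2 * R) := Real.log_nonneg (by linarith)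
  have hl2 : 0 ≤ Real.log 2 := Real.log_nonneg (by norm_num)
  have hMpos : ∀ x n, 0 < ‖transferM lam f T E x n‖ := fun x n =>
    lt_of_lt_of_le (by norm_num) (half_le_norm_transferM lam f T E x n)
  have hlog_le : ∀ x n, Real.log ‖transferM lam f T E x n‖ ≤ n * Real.log (2 * R) := by
    intro x n
    rw [← Real.log_pow]
    exact Real.log_le_log (hMpos x n) (norm_transferM_le lam f T E R hR1 hR n x)
  have hlog_ge : ∀ x n, -Real.log 2 ≤ Real.log ‖transferM lam f T E x n‖ := by
    intro x n
    rw [← Real.log_inv]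
    refine Real.log_le_log (by norm_num) ?_
    have := half_le_norm_transferM lam f T E x n
    linarith
  have hcl : ∀ x n, cocycleLog lam f T E x n
      = Real.log 2 + Real.log ‖transferM lam f T E x n‖ := fun x n =>
    Real.log_mul (by norm_num) (hMpos x n).ne'
  -- a block length `m` at which the mean of the logarithm is close to the Lyapunov exponent
  obtain ⟨m, hm0, hm1, hm2⟩ : ∃ m : ℕ, 0 < m ∧
      (1 / (m : ℝ)) * ∫ x in Set.Ico (0 : ℝ) 1, Real.log ‖transferM lam f T E x m‖ ∂ν
        < LE + κ / 8 ∧ Real.log 2 ≤ m * (κ / 8) := by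
    have h1 := hLya.eventually (gt_mem_nhds (show LE < LE + κ / 8 by linarith))
    obtain ⟨N, hN⟩ := exists_nat_ge (Real.log 2 / (κ / 8))
    obtain ⟨m, ha, hb, hc⟩ :=
      ((eventually_gt_atTop 0).and (h1.and (eventually_ge_atTop N))).exists
    refine ⟨m, ha, hb, ?_⟩
    rw [div_le_iff₀ (by positivity)] at hN
    have : (N : ℝ) ≤ m := by exact_mod_cast hc
    nlinarith
  have hm0' : (0 : ℝ) < m := by exact_mod_cast hm0
  set g : ℝ → ℝ := fun x => Real.log ‖transferM lam f T E x m‖ with hg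
  set B : ℝ := Real.log 2 + m * Real.log (2 * R) with hB
  have hgB : ∀ t, |g t| ≤ B := by
    intro t
    have h1 := hlog_le t m
    have h2 := hlog_ge t m
    have h3 : 0 ≤ (m : ℝ) * Real.log (2 * R) := by positivity
    rw [abs_le]
    constructor <;> simp only [hg, hB] <;> linarith
  have hg1 : ∀ t, g (t + 1) = g t := fun t => by
    simp only [hg, transferM_periodic lam E hfper hTper]
  -- `g` is continuous off the countable set of preimages of the integers
  have hgc : ∀ᵐ x ∂ν, ContinuousAt g x := by
    have hbad : (⋃ i : ℕ, ⋃ k : ℤ, {(T ^ i).symm (k : ℝ)}).Countable :=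
      Set.countable_iUnion fun i => Set.countable_iUnion fun k => Set.countable_singleton _
    filter_upwards [hbad.ae_notMem ν] with x hx
    have hx' : ∀ (i : ℕ) (k : ℤ), (T ^ i) x ≠ k := by
      intro i k hik
      apply hx
      simp only [Set.mem_iUnion, Set.mem_singleton_iff]
      exact ⟨i, k, by rw [← hik, Equiv.symm_apply_apply]⟩
    exact (transferM_continuousAt lam E hTmono (f_continuousAt hγm hfper hfLip) x hx' m).norm.log
      (hMpos x m).ne'
  have hνr : (ν.restrict (Set.Ico (0 : ℝ) 1)) Set.univ = 1 := by simp [hνprob]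
  have hprob : IsProbabilityMeasure (ν.restrict (Set.Ico (0 : ℝ) 1)) := ⟨hνr⟩
  have hcont : ∀ K : ℝ, 0 ≤ K → Continuous (supConv g K) := fun K hK =>
    (LipschitzWith.of_dist_le' (K := K) fun s t => by
      rw [Real.dist_eq, Real.dist_eq]; exact supConv_lip hgB hK s t).continuous
  -- a Lipschitz majorant of `g` with almost the same mean
  obtain ⟨k, hk0, hk⟩ : ∃ k : ℕ, 0 < k ∧
      ∫ x in Set.Ico (0 : ℝ) 1, supConv g k x ∂ν
        < ∫ x in Set.Ico (0 : ℝ) 1, g x ∂ν + m * (κ / 8) := by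
    have ht : Tendsto (fun k : ℕ => ∫ x in Set.Ico (0 : ℝ) 1, supConv g k x ∂ν) atTop
        (nhds (∫ x in Set.Ico (0 : ℝ) 1, g x ∂ν)) := by
      refine tendsto_integral_of_dominated_convergence (fun _ => B) (fun k => ?_)
        (integrable_const B) (fun k => ?_) ?_
      · exact (hcont k (Nat.cast_nonneg k)).aestronglyMeasurable
      · exact ae_of_all _ fun x => abs_supConv_le hgB (Nat.cast_nonneg k) x
      · exact ae_restrict_of_ae (hgc.mono fun x hx => supConv_tendsto hgB hx)
    have h1 := ht.eventually (gt_mem_nhds (show _ < ∫ x in Set.Ico (0 : ℝ) 1, g x ∂ν + m * (κ / 8)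
      from lt_add_of_pos_right _ (by positivity)))
    obtain ⟨k, ha, hb⟩ := ((eventually_gt_atTop 0).and h1).exists
    exact ⟨k, ha, hb⟩
  set G : ℝ → ℝ := supConv g k with hG
  have hk0' : (0 : ℝ) < k := by exact_mod_cast hk0
  have hGcont : Continuous G := hcont k hk0'.le
  have hG1 : ∀ t, G (t + 1) = G t := supConv_periodic hg1
  -- `T ^ m` is again conjugate to an irrational rotation, by the angle `m * α`
  have hhTm : ∀ t, h ((T ^ m) t) = h t + m * α := by
    have : ∀ (j : ℕ) t, h ((T ^ j) t) = h t + j * α := by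
      intro j t
      induction j with
      | zero => simp
      | succ j ih => rw [pow_succ', Equiv.Perm.mul_apply, hhT, ih]; push_cast; ring
    exact this m
  obtain ⟨N, hN⟩ := birkhoff_osc (T ^ m) h G (hαirr.natCast_mul hm0.ne') hCp hk0'
    (perm_pow_add_one hTper m) hh1 hhTm hhC hG1 (abs_supConv_le hgB hk0'.le)
    (supConv_lip hgB hk0'.le) (ε := m * (κ / 8)) (by positivity)
  -- averaging over the second base point gives the uniform bound for the Birkhoff sums of `G`
  have hbirk : ∀ n ≥ N, ∀ x, ∑ i ∈ Finset.range n, G (((T ^ m) ^ i) x)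
      ≤ n * (∫ y in Set.Ico (0 : ℝ) 1, G y ∂ν) + n * (m * (κ / 8)) := by
    intro n hn x
    have hSmono : ∀ i, StrictMono ⇑((T ^ m) ^ i) := fun i =>
      perm_pow_strictMono (perm_pow_strictMono hTmono m) i
    have hii : ∀ i, Integrable (fun y => G (((T ^ m) ^ i) y))
        (ν.restrict (Set.Ico (0 : ℝ) 1)) := fun i =>
      Integrable.of_bound
        (hGcont.measurable.comp (hSmono i).monotone.measurable).aestronglyMeasurable B
        (ae_of_all _ fun y => abs_supConv_le hgB hk0'.le _)
    have hint : Integrable (fun y => ∑ i ∈ Finset.range n, G (((T ^ m) ^ i) y)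
        + n * (m * (κ / 8))) (ν.restrict (Set.Ico (0 : ℝ) 1)) :=
      (integrable_finsetSum _ fun i _ => hii i).add (integrable_const _)
    have h1 := integral_mono (integrable_const (∑ i ∈ Finset.range n, G (((T ^ m) ^ i) x))) hint
      (fun y => hN n hn x y)
    rw [integral_add (integrable_finsetSum _ fun i _ => hii i) (integrable_const _),
      integral_finsetSum _ (fun i _ => hii i)] at h1
    have h2 : ∀ i ∈ Finset.range n, ∫ y in Set.Ico (0 : ℝ) 1, G (((T ^ m) ^ i) y) ∂ν
        = ∫ y in Set.Ico (0 : ℝ) 1, G y ∂ν := fun i _ =>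
      setIntegral_comp_eq ((T ^ m) ^ i) (hSmono i)
        (perm_pow_add_one (perm_pow_add_one hTper m) i)
        (perm_pow_map (perm_pow_strictMono hTmono m) (perm_pow_map hTmono hνinv m) i)
        hνper G hGcont hG1
    rw [Finset.sum_congr rfl h2] at h1
    simpa using h1
  have hIg : ∫ x in Set.Ico (0 : ℝ) 1, g x ∂ν ≤ m * (LE + κ / 8) := by
    rw [one_div, inv_mul_lt_iff₀ hm0'] at hm1
    exact hm1.le
  have hblock : ∀ n ≥ N, ∀ x, cocycleLog lam f T E x (m * n)
      ≤ Real.log 2 + (m * n : ℝ) * (LE + κ / 2) := by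
    intro n hn x
    have h1 := cocycleLog_mul_le lam f T E x m n
    have h2 : ∑ i ∈ Finset.range n, cocycleLog lam f T E (((T ^ m) ^ i) x) m
        ≤ ∑ i ∈ Finset.range n, (Real.log 2 + G (((T ^ m) ^ i) x)) := by
      refine Finset.sum_le_sum fun i _ => ?_
      rw [hcl]
      exact add_le_add_right (le_supConv hgB hk0'.le _) _
    rw [Finset.sum_add_distrib, Finset.sum_const, Finset.card_range, nsmul_eq_mul] at h2
    have h3 := hbirk n hn x
    have hn0 : (0 : ℝ) ≤ n := Nat.cast_nonneg n
    have h4 : (n : ℝ) * (∫ y in Set.Ico (0 : ℝ) 1, G y ∂ν) ≤ n * (m * (LE + κ / 4)) := by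
      refine mul_le_mul_of_nonneg_left ?_ hn0
      linarith
    have h5 := mul_le_mul_of_nonneg_left hm2 hn0
    linarith
  -- the remainder `n % m` costs a bounded amount, absorbed by `n * (κ / 2)`
  set D : ℝ := Real.log 2 + m * |LE + κ / 2| + B with hD
  obtain ⟨N', hN'⟩ := exists_nat_ge (D / (κ / 2))
  refine ⟨max (m * N) N', fun n hn x => (abs_Pdet_le lam f T x E n).trans ?_⟩
  have hn1 : m * N < n := (le_max_left _ _).trans_lt hn
  have hn2 : N' < n := (le_max_right _ _).trans_lt hn
  rw [← Real.log_le_iff_le_exp (hMpos x n)]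
  have hdm := Nat.div_add_mod n m
  have hr : n % m < m := Nat.mod_lt n hm0
  have hq : N ≤ n / m := by
    rw [Nat.le_div_iff_mul_le hm0, mul_comm]; exact hn1.le
  have h1 := cocycleLog_add_le lam f T E x (m * (n / m)) (n % m)
  rw [hdm, hcl x n, hcl _ (n % m)] at h1
  have h2 := hblock (n / m) hq x
  have h3 := hlog_le ((T ^ (m * (n / m))) x) (n % m)
  have h4 : ((n % m : ℕ) : ℝ) * Real.log (2 * R) ≤ m * Real.log (2 * R) := by gcongr
  have h5 : (m : ℝ) * ((n / m : ℕ) : ℝ) = n - ((n % m : ℕ) : ℝ) := by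
    have : ((m * (n / m) + n % m : ℕ) : ℝ) = n := by rw [hdm]
    push_cast at this ⊢
    linarith
  rw [h5] at h2
  have h6 : -(((n % m : ℕ) : ℝ) * (LE + κ / 2)) ≤ m * |LE + κ / 2| := by
    have a1 : ((n % m : ℕ) : ℝ) ≤ m := by exact_mod_cast hr.le
    have a2 : ((n % m : ℕ) : ℝ) * |LE + κ / 2| ≤ m * |LE + κ / 2| := by gcongr
    have a3 := mul_le_mul_of_nonneg_left (neg_abs_le (LE + κ / 2))
      (Nat.cast_nonneg (α := ℝ) (n % m))
    linarith
  have h7 : D ≤ n * (κ / 2) := by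
    rw [div_le_iff₀ (by positivity)] at hN'
    have : (N' : ℝ) ≤ n := by exact_mod_cast hn2.le
    nlinarith
  simp only [hD, hB] at h7
  linarith
end
end

section
/- (Best approximation for the invariant measure.) For every x in the circle, every k ∈ ℕ, and every integer i with 1 ≤ i < q_{k+1}, the ν-measure of the arc between x and T^i x (taking the one of the two complementary arcs with smaller ν-measure) is at least the ν-measure of the arc between x and T^{q_k} x (again the one of smaller ν-measure). -/
/-!
Let `F` be the distribution function of `ν`, normalised by `F 0 = 0` (`cdf0`). Periodicity gives
`F (t + n) = F t + n`, hence `|F t - t| ≤ 1`, and invariance under `T` makes `F (T t) - F t`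
constant. Comparing with the definition of the rotation number, this constant is `α`, so
`F (T^m t) = F t + m α` (`cdf0_iterate`). As `α` is irrational, the orbit of a point is infinite
mod `1`, so `ν` has no atoms (`measure_singleton_zero`), and the `ν`-measure of an arc from `x` to
`T^m x` is the fractional part of `m α`. The smaller of the two arcs therefore has as measure the
distance from `m α` to the nearest integer (`arcDist_eq`).

What is left is the classical best approximation property of convergents (`best_approx_cf`):
consecutive pairs `(q_k, p_k)`, `(q_{k+1}, p_{k+1})` form a basis of `ℤ²` and the errors
`q_k α - p_k` alternate in sign, so for `0 < i < q_{k+1}` the expansion of `(i, p)` in this basis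
gives `|q_k α - p_k| ≤ |i α - p|` (`best_approx_of_unimodular`).
-/

open MeasureTheory Polynomial Filter

noncomputable section

attribute [local instance] Matrix.normedAddCommGroup

/-! ### Best approximation by convergents -/

/-- The lattice argument behind best approximation: expand `(i, p)` in the basis `(Q, P)`,
`(Q', P')` of `ℤ²`. Since `0 < i < Q'`, the first coordinate is nonzero and the two coordinates
have weakly opposite signs, so the two contributions to `i α - p` do not cancel. -/
lemma best_approx_of_unimodular (α : ℝ) (Q Q' P P' i p s : ℤ)
    (hdet : s * (P * Q' - Q * P') = 1)
    (hsign : (Q * α - P) * (Q' * α - P') ≤ 0)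
    (hQ : 0 < Q) (hQ' : 0 < Q') (hi : 0 < i) (hiQ : i < Q') :
    |Q * α - P| ≤ |i * α - p| := by
  obtain ⟨u, hu⟩ : ∃ u, u = s * (p * Q' - i * P') := ⟨_, rfl⟩
  obtain ⟨v, hv⟩ : ∃ v, v = s * (P * i - Q * p) := ⟨_, rfl⟩
  have hi' : i = u * Q + v * Q' := by
    rw [hu, hv]; linear_combination (-i) * hdet
  have hp' : p = u * P + v * P' := by
    rw [hu, hv]; linear_combination (-p) * hdet
  have hu0 : u ≠ 0 := by
    rintro h0
    rw [h0] at hi'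
    have : 0 < v := by by_contra hc; nlinarith
    nlinarith
  have huv : u * v ≤ 0 := by
    by_contra hc
    rcases pos_and_pos_or_neg_and_neg_of_mul_pos (not_le.1 hc) with ⟨h1, h2⟩ | ⟨h1, h2⟩
    · nlinarith
    · nlinarith
  have hu1 : (1 : ℝ) ≤ (u : ℝ) ^ 2 := by
    exact_mod_cast (show (1 : ℤ) ≤ u ^ 2 by have := sq_pos_of_ne_zero hu0; omega)
  have huv' : (u : ℝ) * v ≤ 0 := by exact_mod_cast huv
  have hiR : (i : ℝ) = u * Q + v * Q' := by exact_mod_cast hi'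
  have hpR : (p : ℝ) = u * P + v * P' := by exact_mod_cast hp'
  have key : (i : ℝ) * α - p = u * (Q * α - P) + v * (Q' * α - P') := by
    rw [hiR, hpR]; ring
  rw [key]
  apply sq_le_sq.1
  generalize (Q * α - P) = A at *
  generalize (Q' * α - P') = B at *
  have h1 := mul_nonneg_of_nonpos_of_nonpos huv' hsign
  have h2 := mul_le_mul_of_nonneg_right hu1 (sq_nonneg A)
  nlinarith [sq_nonneg (v * B)]

/-- The continued fraction of an irrational number never terminates; its partial numerators
are `1` and its partial denominators are integers. -/
lemma of_get?_of_irrational {α : ℝ} (hα : Irrational α) (n : ℕ) :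
    ∃ z : ℤ, (GenContFract.of α).s.get? n = some ⟨1, (z : ℝ)⟩ := by
  have hnt : ¬ (GenContFract.of α).TerminatedAt n := fun h => by
    obtain ⟨r, hr⟩ := (GenContFract.terminates_iff_rat α).1 ⟨n, h⟩
    exact hα ⟨r, hr.symm⟩
  obtain ⟨gp, hgp⟩ := Option.ne_none_iff_exists'.1 hnt
  obtain ⟨h1, z, hz⟩ := GenContFract.of_partNum_eq_one_and_exists_int_partDen_eq hgp
  exact ⟨z, by rw [hgp, ← h1, ← hz]⟩

/-- Numerators of the convergents are integers; consecutive terms are treated together to run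
the two-step recurrence. -/
lemma exists_int_contsAux {α : ℝ} (hα : Irrational α) (n : ℕ) :
    (∃ z : ℤ, ((GenContFract.of α).contsAux n).a = z) ∧
      ∃ z : ℤ, ((GenContFract.of α).contsAux (n + 1)).a = z := by
  induction n with
  | zero => exact ⟨⟨1, by simp⟩, ⟨⌊α⌋, by simp [GenContFract.contsAux]⟩⟩
  | succ n ih =>
    obtain ⟨⟨x, hx⟩, ⟨y, hy⟩⟩ := ih
    obtain ⟨z, hz⟩ := of_get?_of_irrational hα n
    refine ⟨⟨y, hy⟩, ⟨z * y + x, ?_⟩⟩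
    rw [GenContFract.contsAux_recurrence hz rfl rfl, hx, hy]
    push_cast; ring

lemma det_of_irrational {α : ℝ} (hα : Irrational α) (n : ℕ) :
    (GenContFract.of α).nums n * (GenContFract.of α).dens (n + 1) -
      (GenContFract.of α).dens n * (GenContFract.of α).nums (n + 1) = (-1) ^ (n + 1) := by
  rw [GenContFract.determinant]
  rw [Finset.prod_congr rfl (g := fun _ => (-1 : ℝ))]
  · simp
  · intro i _
    obtain ⟨z, hz⟩ := of_get?_of_irrational hα i
    rw [GenContFract.partNum_eq_s_a hz]; simp

/-- The errors `q_n α - p_n` alternate in sign. -/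
lemma sign_of_irrational {α : ℝ} (hα : Irrational α) (n : ℕ)
    (hpos : 0 < (GenContFract.of α).dens n) :
    0 < (-1) ^ n * ((GenContFract.of α).dens n * α - (GenContFract.of α).nums n) := by
  obtain ⟨ifp, hifp⟩ : ∃ ifp, GenContFract.IntFractPair.stream α n = some ifp := by
    cases n with
    | zero => exact ⟨_, rfl⟩
    | succ n =>
      obtain ⟨z, hz⟩ := of_get?_of_irrational hα n
      obtain ⟨ifp, h, -⟩ :=
        GenContFract.IntFractPair.exists_succ_get?_stream_of_gcf_of_get?_eq_some hz
      exact ⟨ifp, h⟩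
  have h := GenContFract.sub_convs_eq hifp
  have hfr := GenContFract.IntFractPair.nth_stream_fr_nonneg hifp
  have hne : ifp.fr ≠ 0 := by
    intro h0
    obtain ⟨r, hr⟩ := GenContFract.exists_rat_eq_nth_conv α n
    simp only [h0, if_true] at h
    exact hα ⟨r, by rw [← hr]; linarith⟩
  have hB : ((GenContFract.of α).contsAux (n + 1)).b = (GenContFract.of α).dens n := rfl
  have hpB : 0 ≤ ((GenContFract.of α).contsAux n).b := GenContFract.zero_le_of_contsAux_b
  simp only [if_neg hne, hB, GenContFract.conv_eq_num_div_den] at h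
  have hinv : 0 < ifp.fr⁻¹ := inv_pos.2 (lt_of_le_of_ne hfr hne.symm)
  generalize ((GenContFract.of α).contsAux n).b = b at *
  generalize (GenContFract.of α).dens n = d at *
  generalize (GenContFract.of α).nums n = m at *
  have : d * α - m = d * (α - m / d) := by field_simp
  rw [this, h]
  have h3 : (-1 : ℝ) ^ n * (d * ((-1) ^ n / (d * (ifp.fr⁻¹ * d + b)))) =
      d * (1 / (d * (ifp.fr⁻¹ * d + b))) := by
    have : (-1 : ℝ) ^ n * (-1) ^ n = 1 := by rw [← mul_pow]; simp
    linear_combination (d * (1 / (d * (ifp.fr⁻¹ * d + b)))) * this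
  rw [h3]
  positivity

/-- The classical best approximation property, in terms of the distance to the nearest
integer. -/
theorem best_approx_cf {α : ℝ} (hα : Irrational α) (q : ℕ → ℕ) (hqpos : ∀ m : ℕ, 0 < q m)
    (hqcf : ∀ m : ℕ, ((q m : ℕ) : ℝ) = (GenContFract.of α).dens m)
    (k i : ℕ) (hi : 1 ≤ i) (hik : i < q (k + 1)) :
    |q k * α - round (q k * α)| ≤ |i * α - round (i * α)| := by
  obtain ⟨P, hP⟩ := (exists_int_contsAux hα k).2
  obtain ⟨P', hP'⟩ := (exists_int_contsAux hα (k + 1)).2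
  replace hP : (GenContFract.of α).nums k = P := hP
  replace hP' : (GenContFract.of α).nums (k + 1) = P' := hP'
  have hdet := det_of_irrational hα k
  have hs := sign_of_irrational hα k (by rw [← hqcf]; exact_mod_cast hqpos k)
  have hs' := sign_of_irrational hα (k + 1) (by rw [← hqcf]; exact_mod_cast hqpos (k + 1))
  rw [hP, hP', ← hqcf, ← hqcf] at hdet
  rw [hP, ← hqcf] at hs
  rw [hP', ← hqcf] at hs'
  refine (round_le (q k * α) P).trans ?_
  refine best_approx_of_unimodular α (q k) (q (k + 1)) P P' i (round (i * α)) ((-1) ^ (k + 1))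
    ?_ ?_ (by exact_mod_cast hqpos k) (by exact_mod_cast hqpos (k + 1)) (by omega)
    (by exact_mod_cast hik)
  · have : P * (q (k + 1) : ℤ) - (q k : ℤ) * P' = (-1) ^ (k + 1) := by exact_mod_cast hdet
    rw [this, ← mul_pow]; simp
  · have := mul_pos hs hs'
    have h1 : (-1 : ℝ) ^ k * (-1) ^ k = 1 := by rw [← mul_pow]; simp
    have h2 : (-1 : ℝ) ^ k * (q k * α - P) * ((-1) ^ (k + 1) * (q (k + 1) * α - P')) =
      - ((q k * α - P) * (q (k + 1) * α - P')) := by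
      linear_combination (-((q k * α - P) * (q (k + 1) * α - P'))) * h1
    rw [h2] at this
    push_cast
    linarith

/-! ### The distribution function of the invariant measure -/

lemma measure_Ico_int (ν : Measure ℝ) (hνprob : ν (Set.Ico (0 : ℝ) 1) = 1)
    (hνper : Measure.map (fun t : ℝ => t + 1) ν = ν) (n : ℤ) :
    ν (Set.Ico (n : ℝ) (n + 1)) = 1 := by
  have step : ∀ a b : ℝ, ν (Set.Ico (a + 1) (b + 1)) = ν (Set.Ico a b) := by
    intro a b
    conv_lhs => rw [← hνper]
    rw [Measure.map_apply (by fun_prop) measurableSet_Ico]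
    simp
  induction n using Int.induction_on with
  | zero => simpa using hνprob
  | succ n ih => push_cast at *; rw [step, ih]
  | pred n ih => push_cast at *; rw [← step, ← ih]; congr 2 <;> ring

lemma isLocallyFinite_of_periodic (ν : Measure ℝ) (hνprob : ν (Set.Ico (0 : ℝ) 1) = 1)
    (hνper : Measure.map (fun t : ℝ => t + 1) ν = ν) : IsLocallyFiniteMeasure ν := by
  refine ⟨fun x => ⟨Set.Ioo (x - 1) (x + 1), Ioo_mem_nhds (by linarith) (by linarith), ?_⟩⟩
  have hsub : Set.Ioo (x - 1) (x + 1) ⊆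
      ⋃ j ∈ Finset.Icc (⌊x⌋ - 1) (⌊x⌋ + 1), Set.Ico (j : ℝ) (j + 1) := by
    intro y hy
    simp only [Set.mem_iUnion, Finset.mem_Icc]
    refine ⟨⌊y⌋, ⟨?_, ?_⟩, Int.floor_le y, Int.lt_floor_add_one y⟩
    · rw [← Int.floor_sub_one]; exact Int.floor_mono hy.1.le
    · rw [← Int.floor_add_one]; exact Int.floor_mono hy.2.le
  refine (measure_mono hsub).trans_lt ((measure_biUnion_finset_le _ _).trans_lt ?_)
  simp [measure_Ico_int ν hνprob hνper]

/-- Distribution function of `ν`, normalised by `F 0 = 0`: the signed `ν`-mass of `(0, t]`. -/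
def cdf0 (ν : Measure ℝ) (t : ℝ) : ℝ := ∫ _ in (0 : ℝ)..t, (1 : ℝ) ∂ν

lemma cdf0_sub (ν : Measure ℝ) [IsLocallyFiniteMeasure ν] {a b : ℝ} (hab : a ≤ b) :
    cdf0 ν b - cdf0 ν a = ν.real (Set.Ioc a b) := by
  unfold cdf0
  rw [intervalIntegral.integral_interval_sub_left intervalIntegrable_const
    intervalIntegrable_const, intervalIntegral.integral_const']
  simp [hab]

lemma cdf0_mono (ν : Measure ℝ) [IsLocallyFiniteMeasure ν] : Monotone (cdf0 ν) := fun a b hab => by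
  have := cdf0_sub ν hab
  have h := measureReal_nonneg (μ := ν) (s := Set.Ioc a b)
  linarith

/-- An increasing map preserving `ν` preserves increments of the distribution function. -/
lemma cdf0_sub_map (ν : Measure ℝ) [IsLocallyFiniteMeasure ν]
    {S : ℝ → ℝ} (hS : StrictMono S) (hinv : Measure.map S ν = ν) (a b : ℝ) :
    cdf0 ν (S b) - cdf0 ν (S a) = cdf0 ν b - cdf0 ν a := by
  wlog hab : a ≤ b generalizing a b
  · have := this b a (le_of_not_ge hab); linarith
  rw [cdf0_sub ν hab, cdf0_sub ν (hS.monotone hab)]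
  have : ν (Set.Ioc (S a) (S b)) = ν (Set.Ioc a b) := by
    conv_lhs => rw [← hinv]
    rw [Measure.map_apply hS.monotone.measurable measurableSet_Ioc]
    congr 1; ext x; simp [hS.lt_iff_lt, hS.le_iff_le]
  simp [Measure.real, this]

lemma cdf0_add_int (ν : Measure ℝ) [IsLocallyFiniteMeasure ν]
    (hνprob : ν (Set.Ico (0 : ℝ) 1) = 1)
    (hνper : Measure.map (fun t : ℝ => t + 1) ν = ν)
    (t : ℝ) (n : ℤ) : cdf0 ν (t + n) = cdf0 ν t + n := by
  have hsing : ν {(1 : ℝ)} = ν {(0 : ℝ)} := by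
    conv_lhs => rw [← hνper]
    rw [Measure.map_apply (by fun_prop) (measurableSet_singleton _)]
    congr 1; ext x; simp
  have hone : ν (Set.Ioc (0 : ℝ) 1) = 1 := by
    rw [← hνprob, ← Set.Ioo_union_right zero_lt_one, ← Set.Ioo_union_left zero_lt_one,
      measure_union (by simp) (measurableSet_singleton _),
      measure_union (by simp) (measurableSet_singleton _), hsing]
  have step : ∀ s, cdf0 ν (s + 1) = cdf0 ν s + 1 := by
    intro s
    have h1 := cdf0_sub_map ν (S := fun t => t + 1) (fun a b h => by simpa using h) hνper 0 s
    have h2 := cdf0_sub ν (zero_le_one (α := ℝ))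
    simp only [zero_add, Measure.real, hone, ENNReal.toReal_one] at h1 h2
    linarith
  induction n using Int.induction_on with
  | zero => simp
  | succ n ih => push_cast at *; rw [← add_assoc, step, ih]; ring
  | pred n ih =>
    push_cast at *
    have := step (t + (-n - 1))
    rw [show t + (-(n : ℝ) - 1) + 1 = t + -n by ring, ih] at this
    linarith

lemma abs_cdf0_sub_le (ν : Measure ℝ) [IsLocallyFiniteMeasure ν]
    (hνprob : ν (Set.Ico (0 : ℝ) 1) = 1)
    (hνper : Measure.map (fun t : ℝ => t + 1) ν = ν)
    (t : ℝ) : |cdf0 ν t - t| ≤ 1 := by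
  have h := cdf0_add_int ν hνprob hνper (Int.fract t) ⌊t⌋
  rw [Int.fract_add_floor] at h
  have h0 : cdf0 ν 0 = 0 := by simp [cdf0]
  have h1 := cdf0_mono ν (Int.fract_nonneg t)
  have h2 := cdf0_mono ν (Int.fract_lt_one t).le
  have h3 := cdf0_add_int ν hνprob hνper 0 1
  norm_num at h3
  have h4 := Int.fract_nonneg t
  have h5 := Int.fract_lt_one t
  have h6 := Int.floor_add_fract t
  rw [abs_le]; constructor <;> linarith

/-- The distribution function semiconjugates `T` to the translation by `α`: the increment
`F (T t) - F t` is constant by invariance, and equals the rotation number because `F` stays within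
bounded distance of the identity. -/
lemma cdf0_iterate (ν : Measure ℝ) [IsLocallyFiniteMeasure ν]
    (hνprob : ν (Set.Ico (0 : ℝ) 1) = 1)
    (hνper : Measure.map (fun t : ℝ => t + 1) ν = ν)
    (T : Equiv.Perm ℝ) (α : ℝ) (hTmono : StrictMono ⇑T)
    (hrot : Filter.Tendsto (fun m : ℕ => (T ^ m) 0 / (m : ℝ)) Filter.atTop (nhds α))
    (hνinv : Measure.map (⇑T) ν = ν) (m : ℕ) (t : ℝ) :
    cdf0 ν ((T ^ m) t) = cdf0 ν t + m * α := by
  have h0 : cdf0 ν 0 = 0 := by simp [cdf0]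
  have gen : ∀ (m : ℕ) (t : ℝ), cdf0 ν ((T ^ m) t) = cdf0 ν t + m * cdf0 ν (T 0) := by
    intro m
    induction m with
    | zero => simp
    | succ m ih =>
      intro t
      have := cdf0_sub_map ν hTmono hνinv 0 ((T ^ m) t)
      rw [pow_succ', Equiv.Perm.mul_apply]
      rw [ih] at this
      rw [Nat.cast_succ]
      linarith
  suffices h : cdf0 ν (T 0) = α by rw [gen, h]
  refine tendsto_nhds_unique ?_ hrot
  have hlim : Tendsto (fun m : ℕ => cdf0 ν (T 0) - (T ^ m) 0 / (m : ℝ)) atTop (nhds 0) := by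
    refine squeeze_zero_norm' ?_ tendsto_one_div_atTop_nhds_zero_nat
    filter_upwards [eventually_gt_atTop 0] with m hm
    have hm' : (0 : ℝ) < m := by exact_mod_cast hm
    have h1 := abs_cdf0_sub_le ν hνprob hνper ((T ^ m) 0)
    rw [gen, h0, zero_add] at h1
    rw [Real.norm_eq_abs, show cdf0 ν (T 0) - (T ^ m) 0 / (m : ℝ) =
      (m * cdf0 ν (T 0) - (T ^ m) 0) / m by field_simp, abs_div, abs_of_pos hm']
    gcongr
  have := (tendsto_const_nhds (x := cdf0 ν (T 0))).sub hlim
  simpa using this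

/-- The measure `ν` has no atoms: the points `T^m p` are pairwise distinct mod `1` by
irrationality of `α`, and they all carry the mass of `p` inside a fundamental domain of mass `1`. -/
lemma measure_singleton_zero (ν : Measure ℝ) [IsLocallyFiniteMeasure ν]
    (hνprob : ν (Set.Ico (0 : ℝ) 1) = 1)
    (hνper : Measure.map (fun t : ℝ => t + 1) ν = ν)
    (T : Equiv.Perm ℝ) (α : ℝ) (hTmono : StrictMono ⇑T)
    (hαirr : Irrational α)
    (hrot : Filter.Tendsto (fun m : ℕ => (T ^ m) 0 / (m : ℝ)) Filter.atTop (nhds α))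
    (hνinv : Measure.map (⇑T) ν = ν) (p : ℝ) : ν {p} = 0 := by
  have hT : ∀ (m : ℕ) (x : ℝ), ν {(T ^ m) x} = ν {x} := by
    intro m
    induction m with
    | zero => simp
    | succ m ih =>
      intro x
      rw [pow_succ', Equiv.Perm.mul_apply, ← ih x]
      conv_lhs => rw [← hνinv]
      rw [Measure.map_apply hTmono.monotone.measurable (measurableSet_singleton _)]
      congr 1; ext y; simp
  have h1 : ∀ (x : ℝ), ν {x + 1} = ν {x} := by
    intro x
    conv_lhs => rw [← hνper]
    rw [Measure.map_apply (by fun_prop) (measurableSet_singleton _)]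
    congr 1; ext y; simp
  have hZ : ∀ (n : ℤ) (x : ℝ), ν {x + n} = ν {x} := by
    intro n x
    induction n using Int.induction_on with
    | zero => simp
    | succ n ih => push_cast at *; rw [← add_assoc, h1, ih]
    | pred n ih => push_cast at *; rw [← h1, ← ih]; congr 2; ring
  have hfr : ∀ m : ℕ, ν {Int.fract ((T ^ m) p)} = ν {p} := by
    intro m
    rw [← hZ ⌊(T ^ m) p⌋, Int.fract_add_floor, hT]
  have hinj : Function.Injective fun m : ℕ => Int.fract ((T ^ m) p) := by
    intro m n hmn
    by_contra hne
    obtain ⟨z, hz⟩ := Int.fract_eq_fract.1 hmn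
    have e1 := cdf0_iterate ν hνprob hνper T α hTmono hrot hνinv m p
    have e2 := cdf0_iterate ν hνprob hνper T α hTmono hrot hνinv n p
    rw [show (T ^ m) p = (T ^ n) p + z by linarith, cdf0_add_int ν hνprob hνper, e2] at e1
    have hne' : (m : ℤ) - n ≠ 0 := by omega
    exact (hαirr.intCast_mul hne').ne_int z (by push_cast; linarith)
  by_contra hp
  have hle : ν (⋃ m : ℕ, {Int.fract ((T ^ m) p)}) ≤ 1 := by
    rw [← hνprob]
    refine measure_mono (Set.iUnion_subset fun m => ?_)
    simp [Int.fract_nonneg, Int.fract_lt_one]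
  rw [measure_iUnion (fun m n hmn => by simpa using fun h => hmn (hinj h))
    (fun _ => measurableSet_singleton _)] at hle
  simp only [hfr, ENNReal.tsum_const_eq_top_of_ne_zero hp] at hle
  simp at hle

/-! ### Measures of arcs -/

/-- Irrationality of the increment rules out an arc of full mass `1`, for which the fractional
part would be `0`. -/
lemma arcMeasure_eq (ν : Measure ℝ) [IsLocallyFiniteMeasure ν]
    (hνprob : ν (Set.Ico (0 : ℝ) 1) = 1)
    (hνper : Measure.map (fun t : ℝ => t + 1) ν = ν)
    (hatom : ∀ p, ν {p} = 0) (u v : ℝ) (h : Irrational (cdf0 ν v - cdf0 ν u)) :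
    arcMeasure ν u v = Int.fract (cdf0 ν v - cdf0 ν u) := by
  have : NullSingletonClass ν := ⟨hatom⟩
  have hf := Int.fract_nonneg (v - u)
  have e1 : arcMeasure ν u v = cdf0 ν (u + Int.fract (v - u)) - cdf0 ν u := by
    rw [cdf0_sub ν (by linarith), arcMeasure, Measure.real, measure_congr Ioc_ae_eq_Icc]
  have e2 : arcMeasure ν u v = cdf0 ν v - cdf0 ν u - ⌊v - u⌋ := by
    have := cdf0_add_int ν hνprob hνper (u + Int.fract (v - u)) ⌊v - u⌋
    rw [add_assoc, Int.fract_add_floor, add_sub_cancel] at this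
    rw [e1, this]; ring
  have hle : arcMeasure ν u v ≤ 1 := by
    have h1 := cdf0_add_int ν hνprob hνper u 1
    have h2 := cdf0_mono ν (show u + Int.fract (v - u) ≤ u + (1 : ℤ) by
      push_cast; linarith [Int.fract_lt_one (v - u)])
    push_cast at h1 h2
    rw [e1]; linarith
  symm
  rw [Int.fract_eq_iff]
  refine ⟨ENNReal.toReal_nonneg, lt_of_le_of_ne hle ?_, ⌊v - u⌋, by rw [e2]; ring⟩
  intro h1
  rw [e2] at h1
  exact h.ne_int (⌊v - u⌋ + 1) (by push_cast; linarith)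

lemma arcDist_eq (ν : Measure ℝ) [IsLocallyFiniteMeasure ν]
    (hνprob : ν (Set.Ico (0 : ℝ) 1) = 1)
    (hνper : Measure.map (fun t : ℝ => t + 1) ν = ν)
    (hatom : ∀ p, ν {p} = 0) (u v : ℝ) (h : Irrational (cdf0 ν v - cdf0 ν u)) :
    arcDist ν u v =
      |(cdf0 ν v - cdf0 ν u) - round (cdf0 ν v - cdf0 ν u)| := by
  have h' : Irrational (cdf0 ν u - cdf0 ν v) := by simpa using h.neg
  rw [arcDist, arcMeasure_eq ν hνprob hνper hatom u v h,
    arcMeasure_eq ν hνprob hνper hatom v u h', abs_sub_round_eq_min]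
  congr 1
  rw [← neg_sub (cdf0 ν v), Int.fract_neg]
  intro h0
  rw [Int.fract_eq_iff] at h0
  obtain ⟨-, -, z, hz⟩ := h0
  exact h.ne_int z (by linarith)

/-- **Best approximation for the invariant measure.** For every `x`, `k`,
and `1 ≤ i < q_{k+1}`, the smaller arc between `x` and `T^i x` has `ν`-measure at least
that of the smaller arc between `x` and `T^{q_k} x`. -/
theorem best_approximation_invariant_measure
    (T : Equiv.Perm ℝ) (ν : Measure ℝ) (α : ℝ) (q : ℕ → ℕ)
    (hTmono : StrictMono ⇑T) (hTper : ∀ t : ℝ, T (t + 1) = T t + 1)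
    (hαirr : Irrational α)
    (hrot : Filter.Tendsto (fun m : ℕ => (T ^ m) 0 / (m : ℝ)) Filter.atTop (nhds α))
    (hνprob : ν (Set.Ico (0 : ℝ) 1) = 1)
    (hνinv : MeasureTheory.Measure.map (⇑T) ν = ν)
    (hνper : MeasureTheory.Measure.map (fun t : ℝ => t + 1) ν = ν)
    (hqpos : ∀ m : ℕ, 0 < q m)
    (hqcf : ∀ m : ℕ, ((q m : ℕ) : ℝ) = (GenContFract.of α).dens m)
 :
    ∀ (x : ℝ) (k i : ℕ), 1 ≤ i → i < q (k + 1) →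
      arcDist ν x ((T ^ (q k)) x) ≤ arcDist ν x ((T ^ i) x) := by
  have hlf := isLocallyFinite_of_periodic ν hνprob hνper
  have hatom :=
    measure_singleton_zero ν hνprob hνper T α hTmono hαirr hrot hνinv
  intro x k i hi hik
  have harc : ∀ m : ℕ, 1 ≤ m → arcDist ν x ((T ^ m) x) = |m * α - round (m * α)| := by
    intro m hm
    have hinc : cdf0 ν ((T ^ m) x) - cdf0 ν x = m * α := by
      rw [cdf0_iterate ν hνprob hνper T α hTmono hrot hνinv m x]; ring
    have hirr : Irrational (cdf0 ν ((T ^ m) x) - cdf0 ν x) := by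
      rw [hinc]; exact hαirr.natCast_mul (by omega)
    rw [arcDist_eq ν hνprob hνper hatom x _ hirr, hinc]
  rw [harc _ (hqpos k), harc i hi]
  exact best_approx_cf hαirr q hqpos hqcf k i hi hik
end
end
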